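/- Let 0<α<1, β > 0, and let λ, μ > 0 with λ ≠ μ. Then for every t > 0, ∫₀ᵗ τ^{α−1} E_{α,α}(−μ τ^α) (t−τ)^{β−1} E_{α,β}(−λ (t−τ)^α) dτ = ((λ E_{α,α+β}(−λ t^α) − μ E_{α,α+β}(−μ t^α))/(λ − μ)) · t^{α+β−1}. -/

import Mathlib

open MeasureTheory Set Filter

/-- The two-parameter Mittag-Leffler function `E_{α,β}(z) = ∑_{k≥0} z^k/Γ(αk+β)`. -/
noncomputable def ml (α β z : ℝ) : ℝ := ∑' k : ℕ, z ^ k / Real.Gamma (α * k + β)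

lemma ml_gamma_lower {x R : ℝ} (hx : 1 ≤ x) (hR : 0 < R) :
    R ^ (x - 1) * Real.exp (-R) ≤ Real.Gamma x := by
  rw [Real.Gamma_eq_integral (by linarith), ← integral_exp_neg_Ioi, ← integral_const_mul]
  have hI := Real.GammaIntegral_convergent (s := x) (by linarith)
  calc ∫ s in Ioi R, R ^ (x - 1) * Real.exp (-s)
      ≤ ∫ s in Ioi R, Real.exp (-s) * s ^ (x - 1) := by
        refine setIntegral_mono_on ((integrableOn_exp_neg_Ioi R).const_mul _)
          (hI.mono_set (Ioi_subset_Ioi hR.le)) measurableSet_Ioi ?_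
        intro s hs
        rw [mul_comm]
        gcongr
        exact le_of_lt hs
    _ ≤ ∫ s in Ioi 0, Real.exp (-s) * s ^ (x - 1) := by
        refine setIntegral_mono_set hI ?_ (Ioi_subset_Ioi hR.le).eventuallyLE
        filter_upwards [ae_restrict_mem measurableSet_Ioi] with s hs
        have : (0 : ℝ) < s := hs
        simp only [Pi.zero_apply]
        positivity

lemma ml_summable {α β : ℝ} (hα : 0 < α) (z : ℝ) :
    Summable fun k : ℕ => z ^ k / Real.Gamma (α * k + β) := by
  obtain ⟨R, hR, hRa⟩ : ∃ R : ℝ, 0 < R ∧ R ^ α = 2 * |z| + 1 := by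
    refine ⟨(2 * |z| + 1) ^ α⁻¹, by positivity, ?_⟩
    rw [← Real.rpow_mul (by positivity), inv_mul_cancel₀ hα.ne', Real.rpow_one]
  refine summable_of_isBigO_nat (g := fun k : ℕ => (1 / 2 : ℝ) ^ k)
    (summable_geometric_of_lt_one (by norm_num) (by norm_num)) ?_
  refine Asymptotics.IsBigO.of_bound (R ^ (1 - β) * Real.exp R) ?_
  have hev : ∀ᶠ k : ℕ in atTop, 1 ≤ α * k + β := by
    have : Tendsto (fun k : ℕ => α * (k : ℝ) + β) atTop atTop :=
      tendsto_atTop_add_const_right _ _ (tendsto_natCast_atTop_atTop.const_mul_atTop hα)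
    exact this.eventually_ge_atTop 1
  filter_upwards [hev] with k hk
  have h1 := ml_gamma_lower hk hR
  have hG : 0 < Real.Gamma (α * k + β) := Real.Gamma_pos_of_pos (by linarith)
  rw [norm_div, norm_pow, Real.norm_of_nonneg hG.le, div_le_iff₀ hG, Real.norm_eq_abs,
    Real.norm_of_nonneg (by positivity : (0 : ℝ) ≤ (1 / 2) ^ k)]
  have e : R ^ (α * k + β - 1) = (2 * |z| + 1) ^ k * R ^ (β - 1) := by
    rw [← hRa, ← Real.rpow_mul_natCast hR.le, ← Real.rpow_add hR]
    ring_nf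
  have e2 : R ^ (1 - β) * R ^ (β - 1) = 1 := by
    rw [← Real.rpow_add hR]; simp
  have e3 : Real.exp R * Real.exp (-R) = 1 := by rw [← Real.exp_add]; simp
  calc |z| ^ k ≤ ((1 / 2) * (2 * |z| + 1)) ^ k := by
        gcongr; linarith
    _ = (R ^ (1 - β) * Real.exp R * (1 / 2) ^ k) * (R ^ (α * k + β - 1) * Real.exp (-R)) := by
        rw [e, mul_pow]
        have e4 : (R ^ (1 - β) * R ^ (β - 1)) * (Real.exp R * Real.exp (-R)) = 1 := by
          rw [e2, e3, one_mul]
        linear_combination (-(1 / 2) ^ k * (2 * |z| + 1) ^ k) * e4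
    _ ≤ _ := by gcongr

lemma ml_beta {t a b : ℝ} (ht : 0 < t) (ha : 0 < a) (hb : 0 < b) :
    ∫ x in (0:ℝ)..t, x ^ (a - 1) * (t - x) ^ (b - 1)
      = t ^ (a + b - 1) * (Real.Gamma a * Real.Gamma b / Real.Gamma (a + b)) := by
  have h := Complex.betaIntegral_scaled (a : ℂ) (b : ℂ) ht
  rw [Complex.betaIntegral_eq_Gamma_mul_div _ _ (by simpa) (by simpa)] at h
  apply Complex.ofReal_injective
  rw [← intervalIntegral.integral_ofReal]
  calc _ = ∫ x in (0:ℝ)..t, (x : ℂ) ^ ((a : ℂ) - 1) * ((t : ℂ) - x) ^ ((b : ℂ) - 1) := by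
        refine intervalIntegral.integral_congr fun x hx => ?_
        rw [uIcc_of_le ht.le] at hx
        rw [Complex.ofReal_mul, Complex.ofReal_cpow hx.1, Complex.ofReal_cpow (sub_nonneg.2 hx.2)]
        push_cast
        rfl
    _ = _ := by
        rw [h, Complex.ofReal_mul, Complex.ofReal_cpow ht.le]
        push_cast [← Complex.Gamma_ofReal]
        rfl

lemma ml_beta_int {t a b : ℝ} (ht : 0 < t) (ha : 0 < a) (hb : 0 < b) :
    IntervalIntegrable (fun x : ℝ => x ^ (a - 1) * (t - x) ^ (b - 1)) volume 0 t := by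
  refine not_imp_comm.1 intervalIntegral.integral_undef ?_
  rw [ml_beta ht ha hb]
  have := Real.Gamma_pos_of_pos ha
  have := Real.Gamma_pos_of_pos hb
  have := Real.Gamma_pos_of_pos (add_pos ha hb)
  positivity

/-- the (j,k) term -/
noncomputable def mlTerm (α β lam mu t : ℝ) (p : ℕ × ℕ) (x : ℝ) : ℝ :=
  (x ^ (α - 1) * (t - x) ^ (β - 1)) *
    (((-mu * x ^ α) ^ p.1 / Real.Gamma (α * p.1 + α)) *
      ((-lam * (t - x) ^ α) ^ p.2 / Real.Gamma (α * p.2 + β)))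

lemma mlTerm_integral {α β t : ℝ} (lam mu : ℝ) (hα : 0 < α) (hβ : 0 < β) (ht : 0 < t) (p : ℕ × ℕ) :
    ∫ x in (0:ℝ)..t, mlTerm α β lam mu t p x =
      (-mu) ^ p.1 * (-lam) ^ p.2 *
        ((t ^ α) ^ (p.1 + p.2) / Real.Gamma (α * ↑(p.1 + p.2) + (α + β))) * t ^ (α + β - 1) := by
  obtain ⟨j, k⟩ := p
  have hj : 0 < α * j + α := by positivity
  have hk : 0 < α * k + β := by positivity
  have hGj := (Real.Gamma_pos_of_pos hj).ne'
  have hGk := (Real.Gamma_pos_of_pos hk).ne'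
  have hb := ml_beta ht hj hk
  calc ∫ x in (0:ℝ)..t, mlTerm α β lam mu t (j, k) x
      = ∫ x in (0:ℝ)..t, ((-mu) ^ j * (-lam) ^ k /
          (Real.Gamma (α * j + α) * Real.Gamma (α * k + β))) *
          (x ^ (α * j + α - 1) * (t - x) ^ (α * k + β - 1)) := by
        refine intervalIntegral.integral_congr_ae ?_
        have hae : ∀ᵐ x : ℝ, x ≠ t := by simp [ae_iff]
        filter_upwards [hae] with x hxt hx
        rw [uIoc_of_le ht.le] at hx
        have hx0 : 0 < x := hx.1
        have hx1 : 0 < t - x := sub_pos.2 (lt_of_le_of_ne hx.2 hxt)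
        have e1 : x ^ (α * j + α - 1) = x ^ (α - 1) * (x ^ α) ^ j := by
          rw [← Real.rpow_mul_natCast hx0.le, ← Real.rpow_add hx0]; ring_nf
        have e2 : (t - x) ^ (α * k + β - 1) = (t - x) ^ (β - 1) * ((t - x) ^ α) ^ k := by
          rw [← Real.rpow_mul_natCast hx1.le, ← Real.rpow_add hx1]; ring_nf
        simp only [mlTerm]
        rw [e1, e2, mul_pow, mul_pow]
        field_simp
    _ = _ := by
        rw [intervalIntegral.integral_const_mul, hb]
        have e1 : t ^ (α * j + α + (α * k + β) - 1) = (t ^ α) ^ (j + k) * t ^ (α + β - 1) := by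
          rw [← Real.rpow_mul_natCast ht.le, ← Real.rpow_add ht]; push_cast; ring_nf
        have e2 : α * j + α + (α * k + β) = α * ((j + k : ℕ) : ℝ) + (α + β) := by push_cast; ring
        rw [e1, e2]
        field_simp

lemma ml_hasSum_mul {α β γ : ℝ} (hα : 0 < α) (y z : ℝ) :
    HasSum (fun p : ℕ × ℕ => (y ^ p.1 / Real.Gamma (α * p.1 + β)) *
      (z ^ p.2 / Real.Gamma (α * p.2 + γ))) (ml α β y * ml α γ z) := by
  have h1 := ml_summable (β := β) hα y
  have h2 := ml_summable (β := γ) hα z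
  have h3 := summable_mul_of_summable_norm h1.norm h2.norm
  unfold ml
  exact HasSum.mul h1.hasSum h2.hasSum h3

lemma ml_hasSum_integral {α β t : ℝ} (lam mu : ℝ) (hα : 0 < α) (hβ : 0 < β) (ht : 0 < t)
    (hlam : 0 < lam) (hmu : 0 < mu) :
    HasSum (fun p : ℕ × ℕ => ∫ x in (0:ℝ)..t, mlTerm α β lam mu t p x)
      (∫ τ in (0:ℝ)..t, τ ^ (α - 1) * ml α α (-mu * τ ^ α) *
          ((t - τ) ^ (β - 1) * ml α β (-lam * (t - τ) ^ α))) := by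
  have hs := ml_hasSum_mul (β := α) (γ := β) hα (mu * t ^ α) (lam * t ^ α)
  refine intervalIntegral.hasSum_integral_of_dominated_convergence
    (fun p x => (x ^ (α - 1) * (t - x) ^ (β - 1)) *
      (((mu * t ^ α) ^ p.1 / Real.Gamma (α * p.1 + α)) *
      ((lam * t ^ α) ^ p.2 / Real.Gamma (α * p.2 + β)))) ?_ ?_ ?_ ?_ ?_
  · intro p
    refine Measurable.aestronglyMeasurable ?_
    unfold mlTerm
    fun_prop
  · intro p
    refine Eventually.of_forall fun x hx => ?_
    rw [uIoc_of_le ht.le] at hx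
    have hx0 : 0 ≤ x := hx.1.le
    have hx1 : 0 ≤ t - x := sub_nonneg.2 hx.2
    have h1 : 0 < Real.Gamma (α * p.1 + α) := Real.Gamma_pos_of_pos (by positivity)
    have h2 : 0 < Real.Gamma (α * p.2 + β) := Real.Gamma_pos_of_pos (by positivity)
    unfold mlTerm
    have a1 : |x ^ α| = x ^ α := abs_of_nonneg (by positivity)
    have a2 : |(t - x) ^ α| = (t - x) ^ α := abs_of_nonneg (by positivity)
    rw [norm_mul, norm_mul (_ / _), norm_div, norm_div, norm_pow, norm_pow, Real.norm_of_nonneg h1.le,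
      Real.norm_of_nonneg h2.le,
      Real.norm_of_nonneg (by positivity : 0 ≤ x ^ (α - 1) * (t - x) ^ (β - 1)),
      Real.norm_eq_abs, Real.norm_eq_abs, abs_mul, abs_mul, a1, a2, abs_neg, abs_neg,
      abs_of_pos hmu, abs_of_pos hlam]
    have hx2 : t - x ≤ t := by linarith
    have hx3 : x ≤ t := hx.2
    gcongr
  · exact Eventually.of_forall fun x _ => hs.summable.mul_left _
  · simp_rw [tsum_mul_left]
    exact (ml_beta_int ht hα hβ).mul_const _
  · refine Eventually.of_forall fun x _ => ?_
    have := (ml_hasSum_mul (β := α) (γ := β) hα (-mu * x ^ α) (-lam * (t - x) ^ α)).mul_left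
      (x ^ (α - 1) * (t - x) ^ (β - 1))
    rw [mul_mul_mul_comm]
    exact this

/-- for `0<α<1`, `β>0`, `λ,μ>0`, `λ ≠ μ` and `t > 0`,
`∫₀ᵗ τ^{α−1} E_{α,α}(−μτ^α) (t−τ)^{β−1} E_{α,β}(−λ(t−τ)^α) dτ
  = ((λ E_{α,α+β}(−λt^α) − μ E_{α,α+β}(−μt^α))/(λ−μ)) t^{α+β−1}`. -/
theorem mittagLeffler_convolution_ne (α β lam mu : ℝ)
    (hα : 0 < α) (hα1 : α < 1) (hβ : 0 < β) (hlam : 0 < lam) (hmu : 0 < mu)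
    (hne : lam ≠ mu) :
    ∀ t : ℝ, 0 < t →
      (∫ τ in (0:ℝ)..t, τ ^ (α - 1) * ml α α (-mu * τ ^ α) *
          ((t - τ) ^ (β - 1) * ml α β (-lam * (t - τ) ^ α)))
        = ((lam * ml α (α + β) (-lam * t ^ α) - mu * ml α (α + β) (-mu * t ^ α))
            / (lam - mu)) * t ^ (α + β - 1) := by
  intro t ht
  have hd : lam - mu ≠ 0 := sub_ne_zero.2 hne
  have h := ml_hasSum_integral lam mu hα hβ ht hlam hmu
  simp_rw [mlTerm_integral lam mu hα hβ ht] at h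
  rw [← Finset.HasAntidiagonal.sigmaAntidiagonalEquivProd.hasSum_iff] at h
  have h2 := h.sigma (fun n => hasSum_fintype _)
  refine h2.unique ?_
  have h3 := ((((ml_summable (β := α + β) hα (-lam * t ^ α)).hasSum.mul_left lam).sub
    ((ml_summable (β := α + β) hα (-mu * t ^ α)).hasSum.mul_left mu)).div_const
      (lam - mu)).mul_right (t ^ (α + β - 1))
  refine h3.congr_fun ?_
  intro n
  simp only [Function.comp_apply, Finset.HasAntidiagonal.sigmaAntidiagonalEquivProd_apply]
  rw [Finset.sum_coe_sort (Finset.HasAntidiagonal.antidiagonal n) (fun p : ℕ × ℕ => (-mu) ^ p.1 * (-lam) ^ p.2 *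
        ((t ^ α) ^ (p.1 + p.2) / Real.Gamma (α * ↑(p.1 + p.2) + (α + β))) * t ^ (α + β - 1))]
  have e : ∀ p ∈ Finset.HasAntidiagonal.antidiagonal n, (-mu) ^ p.1 * (-lam) ^ p.2 *
        ((t ^ α) ^ (p.1 + p.2) / Real.Gamma (α * ↑(p.1 + p.2) + (α + β))) * t ^ (α + β - 1)
      = (-mu) ^ p.1 * (-lam) ^ p.2 *
        (((t ^ α) ^ n / Real.Gamma (α * n + (α + β))) * t ^ (α + β - 1)) := by
    intro p hp
    rw [Finset.HasAntidiagonal.mem_antidiagonal.1 hp]; ring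
  rw [Finset.sum_congr rfl e, ← Finset.sum_mul,
    Finset.Nat.sum_antidiagonal_eq_sum_range_succ (fun i j => (-mu) ^ i * (-lam) ^ j)]
  have g := geom_sum₂_mul (-mu) (-lam) (n + 1)
  simp only [Nat.add_sub_cancel] at g
  have g' : ∑ i ∈ Finset.range n.succ, (-mu) ^ i * (-lam) ^ (n - i)
      = ((-mu) ^ (n + 1) - (-lam) ^ (n + 1)) / (lam - mu) := by
    rw [eq_div_iff hd, ← g]; ring
  rw [g', mul_pow, mul_pow]
  ring
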